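/- arXiv:1506.08927 — 2 statements merged into one kernel-verified Lean document; each statement's English description precedes it below -/
import Mathlib

section
/- Assume 0 ≤ i < k < j < ℓ ≤ n. Then Ext^1(X_{i,j}, X_{k,ℓ}) ≠ 0 if and only if ε_k = + and ε_j = +; and Ext^1(X_{k,ℓ}, X_{i,j}) ≠ 0 if and only if ε_k = − and ε_j = −. -/
namespace ESPaper

/-- Source of arrow `a m` (between vertices `m` and `m+1`): `m` if `ε m = +` (true). -/
def asrc (ε : ℕ → Bool) (m : ℕ) : ℕ := if ε m then m else m + 1

/-- Target of arrow `a m`. -/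
def atgt (ε : ℕ → Bool) (m : ℕ) : ℕ := if ε m then m + 1 else m

/-- A representation of the type `A_n` quiver `Q_ε`: finite dimensional vector spaces at the
vertices `1, …, n` (the spaces at the remaining indices are required to be trivial, so that
the maps attached to indices outside `1, …, n-1` carry no information) together with a
linear map along each arrow `a m : asrc ε m → atgt ε m`, `1 ≤ m ≤ n-1`. -/
structure Rep (K : Type) [Field K] (n : ℕ) (ε : ℕ → Bool) : Type 1 where
  V : ℕ → Type
  [instAdd : ∀ m, AddCommGroup (V m)]
  [instMod : ∀ m, Module K (V m)]
  [instFin : ∀ m, FiniteDimensional K (V m)]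
  triv : ∀ m, m = 0 ∨ n < m → Subsingleton (V m)
  φ : ∀ m, V (asrc ε m) →ₗ[K] V (atgt ε m)

attribute [instance] Rep.instAdd Rep.instMod Rep.instFin

/-- A morphism of representations of `Q_ε`. -/
structure RepHom {K : Type} [Field K] {n : ℕ} {ε : ℕ → Bool} (A B : Rep K n ε) where
  app : ∀ m, A.V m →ₗ[K] B.V m
  comm : ∀ m, (app (atgt ε m)).comp (A.φ m) = (B.φ m).comp (app (asrc ε m))

/-- Vertex space of the indecomposable `X_{i,j}` (for `0 ≤ i < j ≤ n`): `K` at the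
vertices `i+1, …, j` and `0` elsewhere. -/
def XV (K : Type) [Field K] (n i j m : ℕ) : Submodule K K :=
  if i + 1 ≤ m ∧ m ≤ j ∧ m ≤ n then ⊤ else ⊥

/-- Arrow map of the indecomposable `X_{i,j}`: the identity whenever both endpoints of the
arrow lie in the support, and zero otherwise. -/
def Xφ (K : Type) [Field K] (n : ℕ) (ε : ℕ → Bool) (i j m : ℕ) :
    XV K n i j (asrc ε m) →ₗ[K] XV K n i j (atgt ε m) :=
  if h : i + 1 ≤ atgt ε m ∧ atgt ε m ≤ j ∧ atgt ε m ≤ n then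
    LinearMap.codRestrict _ (XV K n i j (asrc ε m)).subtype
      (fun x => by simp [XV, h.1, h.2.1, h.2.2])
  else 0

/-- The indecomposable representation `X_{i,j}` of `Q_ε`. -/
def Xrep (K : Type) [Field K] (n : ℕ) (ε : ℕ → Bool) (i j : ℕ) : Rep K n ε where
  V m := XV K n i j m
  instAdd _ := inferInstance
  instMod _ := inferInstance
  instFin _ := inferInstance
  triv m hm := by
    have hneg : ¬ (i + 1 ≤ m ∧ m ≤ j ∧ m ≤ n) := by omega
    have hbot : XV K n i j m = ⊥ := by unfold XV; rw [if_neg hneg]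
    show Subsingleton (XV K n i j m)
    rw [hbot]
    infer_instance
  φ m := Xφ K n ε i j m

variable {K : Type} [Field K]

/-- `Hom(A, B) = 0`. -/
def homZero {n : ℕ} {ε : ℕ → Bool} (A B : Rep K n ε) : Prop :=
  ∀ θ : RepHom A B, ∀ m, θ.app m = 0

/-- `Hom(A, B) ≠ 0`. -/
def homNonzero {n : ℕ} {ε : ℕ → Bool} (A B : Rep K n ε) : Prop :=
  ∃ θ : RepHom A B, ∃ m, θ.app m ≠ 0

/-- `0 → B → E → A → 0` is a short exact sequence. -/
def IsSES {n : ℕ} {ε : ℕ → Bool} {B E A : Rep K n ε}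
    (f : RepHom B E) (g : RepHom E A) : Prop :=
  (∀ m, Function.Injective (f.app m)) ∧ (∀ m, Function.Surjective (g.app m)) ∧
    (∀ m, LinearMap.range (f.app m) = LinearMap.ker (g.app m))

/-- The short exact sequence `0 → B → E → A → 0` splits. -/
def Splits {n : ℕ} {ε : ℕ → Bool} {E A : Rep K n ε} (g : RepHom E A) : Prop :=
  ∃ s : RepHom A E, ∀ m, (g.app m).comp (s.app m) = LinearMap.id

/-- `Ext¹(A, B) ≠ 0`: there is a nonsplit short exact sequence `0 → B → E → A → 0`. -/
def extNonzero {n : ℕ} {ε : ℕ → Bool} (A B : Rep K n ε) : Prop :=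
  ∃ (E : Rep K n ε) (f : RepHom B E) (g : RepHom E A), IsSES f g ∧ ¬ Splits g

/-- `Ext¹(A, B) = 0`. -/
def extZero {n : ℕ} {ε : ℕ → Bool} (A B : Rep K n ε) : Prop := ¬ extNonzero A B

/-- `(U, V)` is an exceptional pair: `Hom(V,U) = 0` and `Ext¹(V,U) = 0`. -/
def ExcPair {n : ℕ} {ε : ℕ → Bool} (U V : Rep K n ε) : Prop := homZero V U ∧ extZero V U

/-!
`Ext¹(A, B)` is the cokernel of the differential
`⨁ₘ Hom(Aₘ, Bₘ) → ⨁ₐ Hom(A_{s(a)}, B_{t(a)})`, `h ↦ (h φ - φ h)`. For two interval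
representations every such `Hom` space is `0` or `k`, and up to signs the differential becomes
`η ↦ (η (m + 1) - η m)`, where `η` lives on the overlap `{k + 1, …, j}` of the supports and `m`
runs over the arrows going from the support of `A` to that of `B`. These are all the arrows inside
the overlap, together with those of the boundary arrows `a_k` and `a_j` that have the right
orientation. If one of the two is missing, the difference equation is solved by summing from the
opposite end; if both are present, telescoping gives one linear obstruction.
-/

section Extensions

variable {n : ℕ} {ε : ℕ → Bool} {A B E : Rep K n ε}

/-- The differential `⨁ₘ Hom(Aₘ, Bₘ) → ⨁ₐ Hom(A_{s(a)}, B_{t(a)})` of the standard two-term complex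
of a quiver, whose kernel is `Hom(A, B)` and whose cokernel is `Ext¹(A, B)`. Families are indexed by
all of `ℕ`; the components off the quiver are zero because the spaces there are trivial. -/
def coboundary (A B : Rep K n ε) (h : ∀ m, A.V m →ₗ[K] B.V m) (m : ℕ) :
    A.V (asrc ε m) →ₗ[K] B.V (atgt ε m) :=
  h (atgt ε m) ∘ₗ A.φ m - B.φ m ∘ₗ h (asrc ε m)

theorem IsSES.exists_comp_eq_of_comp_eq_zero {f : RepHom B E} {g : RepHom E A} (hfg : IsSES f g)
    {m : ℕ} {U : Type*} [AddCommGroup U] [Module K U] (d : U →ₗ[K] E.V m)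
    (hd : g.app m ∘ₗ d = 0) : ∃ c : U →ₗ[K] B.V m, f.app m ∘ₗ c = d := by
  obtain ⟨hf, -, hexact⟩ := hfg
  obtain ⟨r, hr⟩ := (f.app m).exists_leftInverse_of_injective (LinearMap.ker_eq_bot.2 (hf m))
  refine ⟨r ∘ₗ d, LinearMap.ext fun x => ?_⟩
  obtain ⟨y, hy⟩ : d x ∈ LinearMap.range (f.app m) := by
    rw [hexact m]
    exact LinearMap.congr_fun hd x
  have hry : r (f.app m y) = y := LinearMap.congr_fun hr y
  rw [LinearMap.comp_apply, LinearMap.comp_apply, ← hy, hry]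

theorem IsSES.comp_eq_zero {f : RepHom B E} {g : RepHom E A} (hfg : IsSES f g) (m : ℕ) :
    g.app m ∘ₗ f.app m = 0 :=
  LinearMap.range_le_ker_iff.1 (hfg.2.2 m).le

-- Vertexwise linear sections `σ` fail to commute with the arrows by a family `c` with values in
-- `B`; if `c` is the coboundary of `h`, then `σ + f ∘ h` is a morphism.
theorem IsSES.splits_of_surjective_coboundary {f : RepHom B E} {g : RepHom E A}
    (hfg : IsSES f g) (hsurj : Function.Surjective (coboundary A B)) : Splits g := by
  choose σ hσ using fun m =>
    (g.app m).exists_rightInverse_of_surjective (LinearMap.range_eq_top.2 (hfg.2.1 m))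
  have comp_defect_eq_zero (m : ℕ) :
      g.app (atgt ε m) ∘ₗ (E.φ m ∘ₗ σ (asrc ε m) - σ (atgt ε m) ∘ₗ A.φ m) = 0 := by
    rw [LinearMap.comp_sub, ← LinearMap.comp_assoc, ← LinearMap.comp_assoc, g.comm,
      LinearMap.comp_assoc, hσ, hσ, LinearMap.comp_id, LinearMap.id_comp, sub_self]
  choose c hc using fun m => hfg.exists_comp_eq_of_comp_eq_zero _ (comp_defect_eq_zero m)
  obtain ⟨h, rfl⟩ := hsurj c
  refine ⟨⟨fun m => σ m + f.app m ∘ₗ h m, fun m => ?_⟩, fun m => ?_⟩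
  · have hcm := hc m
    rw [coboundary, LinearMap.comp_sub, ← LinearMap.comp_assoc _ (B.φ m), f.comm,
      sub_eq_sub_iff_add_eq_add, add_comm] at hcm
    rwa [LinearMap.add_comp, LinearMap.comp_add, LinearMap.comp_assoc,
      ← LinearMap.comp_assoc _ _ (E.φ m)]
  · rw [LinearMap.comp_add, ← LinearMap.comp_assoc, hfg.comp_eq_zero, hσ, LinearMap.zero_comp,
      add_zero]

/-- The extension of `A` by `B` with cocycle `c`: the spaces of `A ⊕ B`, with arrow maps
`(a, b) ↦ (φ a, φ b + c a)`. -/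
def twistedSum (A B : Rep K n ε) (c : ∀ m, A.V (asrc ε m) →ₗ[K] B.V (atgt ε m)) : Rep K n ε where
  V m := A.V m × B.V m
  triv m hm := by
    have := A.triv m hm
    have := B.triv m hm
    infer_instance
  φ m := (A.φ m ∘ₗ LinearMap.fst K _ _).prod
    (B.φ m ∘ₗ LinearMap.snd K _ _ + c m ∘ₗ LinearMap.fst K _ _)

namespace twistedSum

variable (c : ∀ m, A.V (asrc ε m) →ₗ[K] B.V (atgt ε m))

/-- The inclusion of `B` as a subrepresentation of the extension with cocycle `c`. -/
def inr : RepHom B (twistedSum A B c) where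
  app m := LinearMap.inr K (A.V m) (B.V m)
  comm m := LinearMap.ext fun b => by
    change ((0 : A.V _), B.φ m b) = (A.φ m 0, B.φ m b + c m 0)
    rw [map_zero, map_zero, add_zero]

/-- The projection of the extension with cocycle `c` onto its quotient `A`. -/
def fst : RepHom (twistedSum A B c) A where
  app m := LinearMap.fst K (A.V m) (B.V m)
  comm _ := rfl

theorem isSES : IsSES (inr c) (fst c) :=
  ⟨fun _ => LinearMap.inr_injective, fun _ => LinearMap.fst_surjective,
    fun m => LinearMap.range_inr K (A.V m) (B.V m)⟩

theorem exists_coboundary_eq_of_splits (hsplit : Splits (fst c)) :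
    ∃ h, coboundary A B h = c := by
  obtain ⟨s, hs⟩ := hsplit
  refine ⟨fun m => LinearMap.snd K (A.V m) (B.V m) ∘ₗ s.app m,
    funext fun m => LinearMap.ext fun a => ?_⟩
  have s_fst : (s.app (asrc ε m) a).1 = a := LinearMap.congr_fun (hs _) a
  have s_comm : (s.app (atgt ε m) (A.φ m a)).2 =
      B.φ m (s.app (asrc ε m) a).2 + c m (s.app (asrc ε m) a).1 :=
    congrArg Prod.snd (LinearMap.congr_fun (s.comm m) a)
  rw [s_fst] at s_comm
  exact sub_eq_of_eq_add' s_comm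

end twistedSum

theorem extNonzero_iff_not_surjective_coboundary (A B : Rep K n ε) :
    extNonzero A B ↔ ¬ Function.Surjective (coboundary A B) := by
  constructor
  · rintro ⟨E, f, g, hfg, hns⟩ hsurj
    exact hns (hfg.splits_of_surjective_coboundary hsurj)
  · intro hsurj
    obtain ⟨c, hc⟩ := not_forall.1 hsurj
    exact ⟨twistedSum A B c, twistedSum.inr c, twistedSum.fst c, twistedSum.isSES c,
      fun hsplit => hc (twistedSum.exists_coboundary_eq_of_splits c hsplit)⟩

end Extensions

section IntervalHoms

variable {n p q r s m m' : ℕ} {ε : ℕ → Bool}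

/-- The support of `X_{p,q}`: the vertices at which it is one-dimensional. As in `XV`, the interval
is cut off at `n`. -/
def Xsupp (n p q : ℕ) : Set ℕ := Set.Ioc p (min q n)

theorem mem_Xsupp : m ∈ Xsupp n p q ↔ p + 1 ≤ m ∧ m ≤ q ∧ m ≤ n := by
  rw [Xsupp, Set.mem_Ioc, le_min_iff, Nat.succ_le_iff]

theorem mem_XV (hm : m ∈ Xsupp n p q) (x : K) : x ∈ XV K n p q m := by
  rw [XV, if_pos (mem_Xsupp.1 hm)]
  exact Submodule.mem_top

theorem coe_XV_eq_zero (hm : m ∉ Xsupp n p q) (x : XV K n p q m) : (x : K) = 0 := by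
  have XV_eq_bot : XV K n p q m = ⊥ := if_neg (mem_Xsupp.not.1 hm)
  exact (Submodule.mem_bot K).1 (XV_eq_bot ▸ x.2)

theorem coe_Xφ_apply (hm : atgt ε m ∈ Xsupp n p q) (x : XV K n p q (asrc ε m)) :
    (Xφ K n ε p q m x : K) = x := by
  rw [Xφ, dif_pos (mem_Xsupp.1 hm)]
  rfl

theorem XV_hom_ext {f g : XV K n p q m →ₗ[K] XV K n r s m'}
    (hfg : m ∈ Xsupp n p q → m' ∈ Xsupp n r s → ∀ x, (f x : K) = g x) : f = g := by
  refine LinearMap.ext fun x => Subtype.ext ?_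
  by_cases hm : m ∈ Xsupp n p q
  · by_cases hm' : m' ∈ Xsupp n r s
    · exact hfg hm hm' x
    · rw [coe_XV_eq_zero hm', coe_XV_eq_zero hm']
  · have hx : x = 0 := Subtype.ext (coe_XV_eq_zero hm x)
    rw [hx, map_zero, map_zero]

theorem exists_XV_hom_eq_mul (γ : K) (hγ : m ∈ Xsupp n p q → m' ∉ Xsupp n r s → γ = 0) :
    ∃ f : XV K n p q m →ₗ[K] XV K n r s m', ∀ x, (f x : K) = γ * x := by
  suffices maps : ∀ x ∈ XV K n p q m, LinearMap.mulLeft K γ x ∈ XV K n r s m' from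
    ⟨(LinearMap.mulLeft K γ).restrict maps, fun _ => rfl⟩
  intro x hx
  by_cases hm' : m' ∈ Xsupp n r s
  · exact mem_XV hm' _
  · suffices hγx : γ * x = 0 by
      rw [LinearMap.mulLeft_apply, hγx]
      exact zero_mem _
    by_cases hm : m ∈ Xsupp n p q
    · rw [hγ hm hm', zero_mul]
    · have hx0 : x = 0 := coe_XV_eq_zero hm ⟨x, hx⟩
      rw [hx0, mul_zero]

theorem exists_eq_mul_of_XV_hom (f : XV K n p q m →ₗ[K] XV K n r s m') :
    ∃ γ : K, (γ ≠ 0 → m ∈ Xsupp n p q ∧ m' ∈ Xsupp n r s) ∧ ∀ x, (f x : K) = γ * x := by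
  by_cases hmm' : m ∈ Xsupp n p q ∧ m' ∈ Xsupp n r s
  · obtain ⟨g, hg⟩ := ((XV K n r s m').subtype ∘ₗ f).exists_extend
    refine ⟨g 1, fun _ => hmm', fun x => ?_⟩
    calc (f x : K) = g x := (LinearMap.congr_fun hg x).symm
      _ = g ((x : K) • 1) := by rw [smul_eq_mul, mul_one]
      _ = g 1 * x := by rw [map_smul, smul_eq_mul, mul_comm]
  · have hf : f = 0 := XV_hom_ext fun hm hm' => absurd ⟨hm, hm'⟩ hmm'
    exact ⟨0, fun h => absurd rfl h, fun x => by simp [hf]⟩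

end IntervalHoms

section IntervalExtensions

variable {n p q r s : ℕ} {ε : ℕ → Bool}

/-- The arrows `a_m` with source in the support of `X_{p,q}` and target in that of `X_{r,s}`, i.e.
those with `Hom((X_{p,q})_{s(a_m)}, (X_{r,s})_{t(a_m)}) ≠ 0`. -/
def connectingArrows (n : ℕ) (ε : ℕ → Bool) (p q r s : ℕ) : Set ℕ :=
  {m | asrc ε m ∈ Xsupp n p q ∧ atgt ε m ∈ Xsupp n r s}

/-- Every `γ` is on `M` the difference of some function supported in `S`; equivalently, the relative
coboundary from functions on `S` to functions on the set `M` of edges of the path `ℕ` is onto. -/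
def AdmitsPrimitives (G : Type*) [AddCommGroup G] (S M : Set ℕ) : Prop :=
  ∀ γ : ℕ → G, ∃ η : ℕ → G, Function.support η ⊆ S ∧ ∀ m ∈ M, η (m + 1) - η m = γ m

/-- The sign `±1` relating the orientation of the arrow `a_m` to the direction `m → m + 1`. -/
def arrowSign (ε : ℕ → Bool) (m : ℕ) : ℤˣ := if ε m then 1 else -1

theorem sub_atgt_asrc {G : Type*} [AddCommGroup G] (η : ℕ → G) (m : ℕ) :
    η (atgt ε m) - η (asrc ε m) = arrowSign ε m • (η (m + 1) - η m) := by
  cases h : ε m <;> simp [asrc, atgt, arrowSign, h]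

theorem coe_comp_Xφ_sub_Xφ_comp_apply {h : ∀ m, XV K n p q m →ₗ[K] XV K n r s m} {η : ℕ → K}
    (hη : Function.support η ⊆ Xsupp n p q ∩ Xsupp n r s) (hmul : ∀ m x, (h m x : K) = η m * x)
    {m : ℕ} (hm : atgt ε m ∈ Xsupp n r s) (x : XV K n p q (asrc ε m)) :
    ((h (atgt ε m) ∘ₗ Xφ K n ε p q m - Xφ K n ε r s m ∘ₗ h (asrc ε m)) x : K) =
      arrowSign ε m • (η (m + 1) - η m) * x := by
  have target_term : (h (atgt ε m) (Xφ K n ε p q m x) : K) = η (atgt ε m) * x := by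
    rw [hmul]
    by_cases ht : atgt ε m ∈ Xsupp n p q
    · rw [coe_Xφ_apply ht]
    · have hη0 : η (atgt ε m) = 0 := Function.notMem_support.1 fun h0 => ht (hη h0).1
      rw [hη0, zero_mul, zero_mul]
  have source_term : (Xφ K n ε r s m (h (asrc ε m) x) : K) = η (asrc ε m) * x := by
    rw [coe_Xφ_apply hm, hmul]
  rw [LinearMap.sub_apply, LinearMap.comp_apply, LinearMap.comp_apply, Submodule.coe_sub,
    target_term, source_term, ← sub_mul, sub_atgt_asrc]

theorem admitsPrimitives_of_surjective_coboundary
    (hsurj : Function.Surjective (coboundary (Xrep K n ε p q) (Xrep K n ε r s))) :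
    AdmitsPrimitives K (Xsupp n p q ∩ Xsupp n r s) (connectingArrows n ε p q r s) := by
  intro γ
  have exists_cochain (m : ℕ) : ∃ c : XV K n p q (asrc ε m) →ₗ[K] XV K n r s (atgt ε m),
      m ∈ connectingArrows n ε p q r s → ∀ x, (c x : K) = arrowSign ε m • γ m * x := by
    by_cases hm : m ∈ connectingArrows n ε p q r s
    · obtain ⟨c, hc⟩ := exists_XV_hom_eq_mul (p := p) (q := q) (m := asrc ε m)
        (arrowSign ε m • γ m) fun _ ht => absurd hm.2 ht
      exact ⟨c, fun _ => hc⟩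
    · exact ⟨0, fun hm' => absurd hm' hm⟩
  choose c hc using exists_cochain
  obtain ⟨h, hh⟩ := hsurj c
  choose η hη hmul using fun m =>
    exists_eq_mul_of_XV_hom (n := n) (p := p) (q := q) (r := r) (s := s) (h m)
  refine ⟨η, hη, fun m hm => ?_⟩
  let one : XV K n p q (asrc ε m) := ⟨1, mem_XV hm.1 1⟩
  refine MulAction.injective (arrowSign ε m) ?_
  calc arrowSign ε m • (η (m + 1) - η m)
      = arrowSign ε m • (η (m + 1) - η m) * (one : K) := (mul_one _).symm
    _ = (c m one : K) := by
        rw [← coe_comp_Xφ_sub_Xφ_comp_apply hη hmul hm.2 one, ← hh]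
        rfl
    _ = arrowSign ε m • γ m := by rw [hc m hm, mul_one]

theorem surjective_coboundary_of_admitsPrimitives
    (hprim : AdmitsPrimitives K (Xsupp n p q ∩ Xsupp n r s) (connectingArrows n ε p q r s)) :
    Function.Surjective (coboundary (Xrep K n ε p q) (Xrep K n ε r s)) := by
  intro c
  choose γ _ hγ using fun m => exists_eq_mul_of_XV_hom (n := n) (p := p) (q := q) (r := r) (s := s)
    (m := asrc ε m) (m' := atgt ε m) (c m)
  obtain ⟨η, hη, hdiff⟩ := hprim fun m => arrowSign ε m • γ m
  choose h hmul using fun m => exists_XV_hom_eq_mul (n := n) (p := p) (q := q) (r := r) (s := s)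
    (m := m) (m' := m) (η m) fun _ hm => Function.notMem_support.1 fun h0 => hm (hη h0).2
  refine ⟨h, funext fun m => XV_hom_ext fun hs ht x => ?_⟩
  have hsign : arrowSign ε m • (arrowSign ε m • γ m) = γ m := by
    rw [smul_smul, Int.units_mul_self, one_smul]
  rw [hγ, ← hsign, ← hdiff m ⟨hs, ht⟩]
  exact coe_comp_Xφ_sub_Xφ_comp_apply hη hmul ht x

theorem extNonzero_Xrep_iff : extNonzero (Xrep K n ε p q) (Xrep K n ε r s) ↔
    ¬ AdmitsPrimitives K (Xsupp n p q ∩ Xsupp n r s) (connectingArrows n ε p q r s) := by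
  rw [extNonzero_iff_not_surjective_coboundary]
  exact not_congr
    ⟨admitsPrimitives_of_surjective_coboundary, surjective_coboundary_of_admitsPrimitives⟩

end IntervalExtensions

section Primitives

variable {G : Type*} [AddCommGroup G] {k j : ℕ} {M : Set ℕ}

theorem admitsPrimitives_of_left_notMem (hM : M ⊆ Set.Icc k j) (hk : k ∉ M) :
    AdmitsPrimitives G (Set.Ioc k j) M := by
  intro γ
  let η : ℕ → G := (Set.Ioc k j).indicator fun m => -∑ r ∈ Finset.Ico m (j + 1), γ r
  have η_apply {m : ℕ} (hm : k < m) : η m = -∑ r ∈ Finset.Ico m (j + 1), γ r := by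
    by_cases hmj : m ≤ j
    · exact Set.indicator_of_mem (s := Set.Ioc k j) ⟨hm, hmj⟩ _
    · rw [Finset.Ico_eq_empty (by omega), Finset.sum_empty, neg_zero]
      exact Set.indicator_of_notMem (fun h => hmj h.2) _
  refine ⟨η, Set.support_indicator_subset, fun m hm => ?_⟩
  have hkm : k < m := (hM hm).1.lt_of_ne fun h => hk (h ▸ hm)
  rw [η_apply hkm, η_apply (by omega),
    Finset.sum_eq_sum_Ico_succ_bot (Nat.lt_succ_of_le (hM hm).2)]
  abel

theorem admitsPrimitives_of_right_notMem (hM : M ⊆ Set.Icc k j) (hj : j ∉ M) :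
    AdmitsPrimitives G (Set.Ioc k j) M := by
  intro γ
  let η : ℕ → G := (Set.Ioc k j).indicator fun m => ∑ r ∈ Finset.Ico k m, γ r
  have η_apply {m : ℕ} (hm : m ≤ j) : η m = ∑ r ∈ Finset.Ico k m, γ r := by
    by_cases hkm : k < m
    · exact Set.indicator_of_mem (s := Set.Ioc k j) ⟨hkm, hm⟩ _
    · rw [Finset.Ico_eq_empty hkm, Finset.sum_empty]
      exact Set.indicator_of_notMem (fun h => hkm h.1) _
  refine ⟨η, Set.support_indicator_subset, fun m hm => ?_⟩
  have hmj : m < j := (hM hm).2.lt_of_ne fun h => hj (h ▸ hm)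
  rw [η_apply hmj, η_apply hmj.le, Finset.sum_Ico_succ_top (hM hm).1, add_sub_cancel_left]

-- The differences over `[k, j]` telescope to `η (j + 1) - η k = 0`, so their sum cannot be nonzero.
theorem not_admitsPrimitives_of_Icc_subset [Nontrivial G] (hkj : k ≤ j) (hM : Set.Icc k j ⊆ M) :
    ¬ AdmitsPrimitives G (Set.Ioc k j) M := by
  intro hprim
  obtain ⟨a, ha⟩ := exists_ne (0 : G)
  obtain ⟨η, hη, hdiff⟩ := hprim (Pi.single k a)
  have η_eq_zero {m : ℕ} (hm : m ∉ Set.Ioc k j) : η m = 0 :=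
    Function.notMem_support.1 fun h => hm (hη h)
  have mem_Icc_of_mem_Ico {m : ℕ} (hm : m ∈ Finset.Ico k (j + 1)) : m ∈ Set.Icc k j :=
    (Finset.mem_Ico.1 hm).imp_right Nat.le_of_lt_succ
  refine ha ?_
  calc a = ∑ m ∈ Finset.Ico k (j + 1), (Pi.single k a : ℕ → G) m := by
        rw [Finset.sum_pi_single', if_pos (Finset.left_mem_Ico.2 (Nat.lt_succ_of_le hkj))]
    _ = ∑ m ∈ Finset.Ico k (j + 1), (η (m + 1) - η m) :=
        Finset.sum_congr rfl fun m hm => (hdiff m (hM (mem_Icc_of_mem_Ico hm))).symm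
    _ = η (j + 1) - η k := Finset.sum_Ico_sub η (by omega)
    _ = 0 := by rw [η_eq_zero (by simp), η_eq_zero (by simp), sub_zero]

theorem admitsPrimitives_Ioc_iff [Nontrivial G] (P : ℕ → Prop) (hkj : k ≤ j) :
    AdmitsPrimitives G (Set.Ioc k j) {m ∈ Set.Icc k j | m = k ∨ m = j → P m} ↔
      ¬ (P k ∧ P j) := by
  constructor
  · contrapose!
    rintro ⟨hk, hj⟩
    refine not_admitsPrimitives_of_Icc_subset hkj fun m hm => ⟨hm, ?_⟩
    rintro (rfl | rfl) <;> assumption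
  · intro hends
    rcases not_and_or.1 hends with hk | hj
    · exact admitsPrimitives_of_left_notMem (Set.sep_subset _ _) fun h => hk (h.2 (.inl rfl))
    · exact admitsPrimitives_of_right_notMem (Set.sep_subset _ _) fun h => hj (h.2 (.inr rfl))

end Primitives

section Interlaced

variable {n i k j l : ℕ} {ε : ℕ → Bool}

theorem Xsupp_inter_Xsupp (hik : i ≤ k) (hjl : j ≤ l) (hjn : j ≤ n) :
    Xsupp n i j ∩ Xsupp n k l = Set.Ioc k j := by
  ext m
  simp only [Set.mem_inter_iff, mem_Xsupp, Set.mem_Ioc]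
  omega

theorem connectingArrows_interlaced (hik : i < k) (hjl : j < l) (hln : l ≤ n) :
    connectingArrows n ε i j k l = {m ∈ Set.Icc k j | m = k ∨ m = j → ε m = true} := by
  ext m
  cases h : ε m <;>
    simp only [connectingArrows, mem_Xsupp, asrc, atgt, h, Set.mem_ofPred_eq, Set.mem_Icc] <;>
    grind

theorem connectingArrows_interlaced_swap (hik : i < k) (hjl : j < l) (hln : l ≤ n) :
    connectingArrows n ε k l i j = {m ∈ Set.Icc k j | m = k ∨ m = j → ε m = false} := by
  ext m
  cases h : ε m <;>
    simp only [connectingArrows, mem_Xsupp, asrc, atgt, h, Set.mem_ofPred_eq, Set.mem_Icc] <;>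
    grind

end Interlaced

/-- Lemma 3.9 (interlaced case), Ext part. -/
theorem ext_interlaced (K : Type) [Field K] (n : ℕ) (ε : ℕ → Bool) (i k j l : ℕ)
    (h1 : i < k) (h2 : k < j) (h3 : j < l) (h4 : l ≤ n) :
    (extNonzero (Xrep K n ε i j) (Xrep K n ε k l) ↔ ε k = true ∧ ε j = true) ∧
    (extNonzero (Xrep K n ε k l) (Xrep K n ε i j) ↔ ε k = false ∧ ε j = false) := by
  have hinter : Xsupp n i j ∩ Xsupp n k l = Set.Ioc k j :=
    Xsupp_inter_Xsupp h1.le h3.le (h3.le.trans h4)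
  constructor
  · rw [extNonzero_Xrep_iff, hinter, connectingArrows_interlaced h1 h3 h4,
      admitsPrimitives_Ioc_iff (fun m => ε m = true) h2.le, not_not]
  · rw [extNonzero_Xrep_iff, Set.inter_comm, hinter, connectingArrows_interlaced_swap h1 h3 h4,
      admitsPrimitives_Ioc_iff (fun m => ε m = false) h2.le, not_not]

end ESPaper
end

section
/- Let U = X_{i,j} and V = X_{k,ℓ} be distinct indecomposable representations of Q_ε (0 ≤ i < j ≤ n, 0 ≤ k < ℓ ≤ n, {i,j} ≠ {k,ℓ}). Then neither (U,V) nor (V,U) is an exceptional pair if and only if the chords {i,j} and {k,ℓ} cross. -/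
namespace ESPaper

variable {K : Type} [Field K]

/-- The chords `c = {c.1, c.2}` and `d = {d.1, d.2}` (with `c.1 < c.2`, `d.1 < d.2`) cross. -/
def Crosses (ε : ℕ → Bool) (c d : ℕ × ℕ) : Prop :=
  (c.1 < d.1 ∧ d.1 < c.2 ∧ c.2 < d.2 ∧ ε d.1 = ε c.2) ∨
  (d.1 < c.1 ∧ c.1 < d.2 ∧ d.2 < c.2 ∧ ε c.1 = ε d.2) ∨
  (c.1 < d.1 ∧ d.1 < d.2 ∧ d.2 < c.2 ∧ ε d.1 ≠ ε d.2) ∨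
  (d.1 < c.1 ∧ c.1 < c.2 ∧ c.2 < d.2 ∧ ε c.1 ≠ ε c.2)

/-- The chords `c` and `d` share an endpoint. -/
def SharesEndpoint (c d : ℕ × ℕ) : Prop :=
  c.1 = d.1 ∨ c.1 = d.2 ∨ c.2 = d.1 ∨ c.2 = d.2

/-- The chord `c` is clockwise from the chord `d` (chords written with `c.1 < c.2`, `d.1 < d.2`). -/
def Cw (ε : ℕ → Bool) (c d : ℕ × ℕ) : Prop :=
  (c.2 = d.1 ∧ ε c.2 = true) ∨
  (d.2 = c.1 ∧ ε c.1 = false) ∨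
  (c.1 = d.1 ∧ ((c.2 < d.2 ∧ ε c.2 = false) ∨ (d.2 < c.2 ∧ ε d.2 = true))) ∨
  (c.2 = d.2 ∧ ((c.1 < d.1 ∧ ε d.1 = false) ∨ (d.1 < c.1 ∧ ε c.1 = true)))

/-- The graph on `{0,…,n} ⊆ ℕ` determined by a finite set of chords. -/
def chordGraph (d : Finset (ℕ × ℕ)) : SimpleGraph ℕ :=
  SimpleGraph.fromEdgeSet {e : Sym2 ℕ | ∃ c ∈ d, e = s(c.1, c.2)}

/-- The graph on `{0,…,n} ⊆ ℕ` determined by a family of chords. -/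
def chordGraphF {k : ℕ} (c : Fin k → ℕ × ℕ) : SimpleGraph ℕ :=
  SimpleGraph.fromEdgeSet {e : Sym2 ℕ | ∃ a : Fin k, e = s((c a).1, (c a).2)}

/-- `d` is a strand diagram on `S_{n,ε}`: valid pairwise-noncrossing chords forming a forest. -/
def IsDiagram (n : ℕ) (ε : ℕ → Bool) (d : Finset (ℕ × ℕ)) : Prop :=
  (∀ c ∈ d, c.1 < c.2 ∧ c.2 ≤ n) ∧
  (∀ c ∈ d, ∀ c' ∈ d, ¬ Crosses ε c c') ∧
  (chordGraph d).IsAcyclic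

/-- The family `c` is a strand diagram (pairwise-noncrossing chords forming a forest). -/
def IsDiagramF {k : ℕ} (ε : ℕ → Bool) (c : Fin k → ℕ × ℕ) : Prop :=
  (∀ a b : Fin k, ¬ Crosses ε (c a) (c b)) ∧ (chordGraphF c).IsAcyclic

/-- The partial order of the poset `P_d`: `x ≤ y` iff there is a chain of chords of `d`
from `x` to `y` in which each chord shares an endpoint with, and is clockwise from,
the previous one. -/
def leD (ε : ℕ → Bool) (d : Finset (ℕ × ℕ)) : ℕ × ℕ → ℕ × ℕ → Prop :=
  Relation.ReflTransGen (fun x y => x ∈ d ∧ y ∈ d ∧ SharesEndpoint x y ∧ Cw ε y x)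

/-!
`Hom(A, B)` and `Ext¹(A, B)` are the kernel and cokernel of the differential
`∏ₘ Hom(Aₘ, Bₘ) → ∏ₘ Hom(A_{s(m)}, B_{t(m)})`, where the arrow `m` goes from `s(m)` to `t(m)`.
Hence `(U, V)` is an exceptional pair iff `Hom(V, U) = 0` and the Euler form `⟨V, U⟩` vanishes.
For interval representations the first condition follows from the second: a nonzero morphism is
nonzero exactly on the intersection of the two supports, so no arrow contributing to `⟨V, U⟩`
leaves or enters this intersection, and then `⟨V, U⟩ = 1`. Finally `⟨V, U⟩` telescopes to a sum of
four terms, one for each endpoint of the two chords, and both `⟨V, U⟩` and `⟨U, V⟩` are nonzero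
exactly when the chords cross.
-/

section PiFinrank

variable {R ι : Type*} {M : ι → Type*} [∀ i, AddCommGroup (M i)]

theorem bijective_pi_proj_of_subsingleton [Semiring R] [∀ i, Module R (M i)] {s : Finset ι}
    (hs : ∀ i ∉ s, Subsingleton (M i)) :
    Function.Bijective (LinearMap.pi fun i : s => LinearMap.proj (R := R) (φ := M) i.1) := by
  classical
  refine ⟨fun x y hxy => funext fun i => ?_, fun y => ?_⟩
  · by_cases hi : i ∈ s
    · exact congrFun hxy ⟨i, hi⟩
    · exact (hs i hi).elim _ _
  · exact ⟨fun i => if hi : i ∈ s then y ⟨i, hi⟩ else 0, funext fun i => dif_pos i.2⟩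

variable [Ring R] [∀ i, Module R (M i)] [∀ i, Module.Finite R (M i)]

theorem finite_pi_of_subsingleton {s : Finset ι} (hs : ∀ i ∉ s, Subsingleton (M i)) :
    Module.Finite R (∀ i, M i) :=
  Module.Finite.equiv (LinearEquiv.ofBijective _ (bijective_pi_proj_of_subsingleton hs)).symm

theorem finrank_pi_eq_sum_of_subsingleton [StrongRankCondition R] [∀ i, Module.Free R (M i)]
    {s : Finset ι} (hs : ∀ i ∉ s, Subsingleton (M i)) :
    Module.finrank R (∀ i, M i) = ∑ i ∈ s, Module.finrank R (M i) := by
  rw [(LinearEquiv.ofBijective _ (bijective_pi_proj_of_subsingleton (R := R) hs)).finrank_eq,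
    Module.finrank_pi_fintype, Finset.sum_coe_sort s fun i => Module.finrank R (M i)]

end PiFinrank

theorem exists_comp_eq_of_range_le {V W E : Type*} [AddCommGroup V] [Module K V]
    [AddCommGroup W] [Module K W] [AddCommGroup E] [Module K E] {f : W →ₗ[K] E} {u : V →ₗ[K] E}
    (h : LinearMap.range u ≤ LinearMap.range f) : ∃ η : V →ₗ[K] W, f.comp η = u := by
  obtain ⟨η, hη⟩ := Module.projective_lifting_property f.rangeRestrict
    (u.codRestrict (LinearMap.range f) fun x => h ⟨x, rfl⟩) f.surjective_rangeRestrict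
  exact ⟨η, LinearMap.ext fun x => congrArg Subtype.val (LinearMap.congr_fun hη x)⟩

section Differential

variable {n : ℕ} {ε : ℕ → Bool}

/-- The differential `∏ₘ Hom(Aₘ, Bₘ) → ∏ₘ Hom(A_{s(m)}, B_{t(m)})` of the standard two-term complex
of representations, `s(m)` and `t(m)` being the ends of the arrow `m`. Its kernel is `Hom(A, B)`
and its cokernel is `Ext¹(A, B)`. -/
def homDifferential (A B : Rep K n ε) :
    (∀ m, A.V m →ₗ[K] B.V m) →ₗ[K] ∀ m, A.V (asrc ε m) →ₗ[K] B.V (atgt ε m) where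
  toFun h m := (h (atgt ε m)).comp (A.φ m) - (B.φ m).comp (h (asrc ε m))
  map_add' h h' := by
    funext m
    simp only [Pi.add_apply, LinearMap.add_comp, LinearMap.comp_add]
    abel
  map_smul' a h := by
    funext m
    simp only [Pi.smul_apply, LinearMap.smul_comp, LinearMap.comp_smul, smul_sub,
      RingHom.id_apply]

theorem homDifferential_apply (A B : Rep K n ε) (h : ∀ m, A.V m →ₗ[K] B.V m) (m : ℕ) :
    homDifferential A B h m = (h (atgt ε m)).comp (A.φ m) - (B.φ m).comp (h (asrc ε m)) :=
  rfl

theorem homZero_iff_injective_homDifferential (A B : Rep K n ε) :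
    homZero A B ↔ Function.Injective (homDifferential A B) := by
  rw [injective_iff_map_eq_zero]
  constructor
  · intro hom_zero h hh
    exact funext (hom_zero ⟨h, fun m => sub_eq_zero.1 (congrFun hh m)⟩)
  · intro inj θ m
    exact congrFun (inj θ.app (funext fun m => sub_eq_zero.2 (θ.comm m))) m

/-- The extension `0 → B → E → A → 0` with cocycle `η`: as a graded vector space it is `A ⊕ B`, and
`η` is the component from `A` to `B` of its arrow maps. -/
def cocycleExtension (A B : Rep K n ε) (η : ∀ m, A.V (asrc ε m) →ₗ[K] B.V (atgt ε m)) :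
    Rep K n ε where
  V m := A.V m × B.V m
  triv m hm := by
    have := A.triv m hm
    have := B.triv m hm
    infer_instance
  φ m := ((A.φ m).comp (LinearMap.fst K _ _)).prod ((η m).coprod (B.φ m))

section CocycleExtension

variable (A B : Rep K n ε) (η : ∀ m, A.V (asrc ε m) →ₗ[K] B.V (atgt ε m))

/-- The inclusion of `B` into the extension of `A` by `B` with cocycle `η`. -/
def cocycleExtensionInr : RepHom B (cocycleExtension A B η) where
  app m := LinearMap.inr K (A.V m) (B.V m)
  comm m := by
    refine LinearMap.ext fun y => ?_
    change ((0, B.φ m y) : A.V _ × B.V _) = (A.φ m 0, η m 0 + B.φ m y)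
    rw [map_zero, map_zero, zero_add]

/-- The projection onto `A` of the extension of `A` by `B` with cocycle `η`. -/
def cocycleExtensionFst : RepHom (cocycleExtension A B η) A where
  app m := LinearMap.fst K (A.V m) (B.V m)
  comm _ := rfl

theorem isSES_cocycleExtension :
    IsSES (cocycleExtensionInr A B η) (cocycleExtensionFst A B η) :=
  ⟨fun _ => LinearMap.inr_injective, fun _ => LinearMap.fst_surjective,
    fun m => LinearMap.range_inr K (A.V m) (B.V m)⟩

theorem exists_homDifferential_eq_of_splits (hη : Splits (cocycleExtensionFst A B η)) :
    ∃ h, homDifferential A B h = η := by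
  obtain ⟨s, hs⟩ := hη
  let σ : ∀ m, A.V m →ₗ[K] A.V m × B.V m := s.app
  have fst_section (m : ℕ) (x : A.V m) : (σ m x).1 = x := LinearMap.congr_fun (hs m) x
  refine ⟨fun m => (LinearMap.snd K _ _).comp (σ m), funext fun m => LinearMap.ext fun x => ?_⟩
  have snd_comm : (σ _ (A.φ m x)).2 = η m (σ _ x).1 + B.φ m (σ _ x).2 :=
    congrArg Prod.snd (LinearMap.congr_fun (s.comm m) x)
  rw [fst_section] at snd_comm
  exact sub_eq_of_eq_add snd_comm

end CocycleExtension

theorem IsSES.exists_defect {A B E : Rep K n ε} {f : RepHom B E} {g : RepHom E A}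
    (hfg : IsSES f g) {s : ∀ m, A.V m →ₗ[K] E.V m}
    (hs : ∀ m, (g.app m).comp (s m) = LinearMap.id) (m : ℕ) :
    ∃ η : A.V (asrc ε m) →ₗ[K] B.V (atgt ε m),
      (f.app _).comp η = (E.φ m).comp (s _) - (s _).comp (A.φ m) := by
  refine exists_comp_eq_of_range_le ?_
  rw [hfg.2.2, LinearMap.range_le_ker_iff, LinearMap.comp_sub, ← LinearMap.comp_assoc, g.comm,
    LinearMap.comp_assoc, hs, ← LinearMap.comp_assoc, hs, LinearMap.comp_id, LinearMap.id_comp,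
    sub_self]

-- A family of vertexwise sections `s` is corrected to `s + f ∘ h`, where `h` bounds its defect.
theorem IsSES.splits_of_surjective_homDifferential {A B E : Rep K n ε} {f : RepHom B E}
    {g : RepHom E A} (hfg : IsSES f g) (hAB : Function.Surjective (homDifferential A B)) :
    Splits g := by
  choose s hs using fun m =>
    (g.app m).exists_rightInverse_of_surjective (LinearMap.range_eq_top.2 (hfg.2.1 m))
  choose η hη using hfg.exists_defect hs
  obtain ⟨h, rfl⟩ := hAB η
  have comp_zero (m : ℕ) : (g.app m).comp (f.app m) = 0 :=
    LinearMap.range_le_ker_iff.1 (hfg.2.2 m).le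
  refine ⟨⟨fun m => s m + (f.app m).comp (h m), fun m => ?_⟩, fun m => ?_⟩
  · have defect := hη m
    rw [homDifferential_apply, LinearMap.comp_sub, ← LinearMap.comp_assoc, ← LinearMap.comp_assoc,
      f.comm, sub_eq_sub_iff_add_eq_add, add_comm] at defect
    rw [LinearMap.add_comp, LinearMap.comp_add, defect, LinearMap.comp_assoc]
  · rw [LinearMap.comp_add, hs, ← LinearMap.comp_assoc, comp_zero, LinearMap.zero_comp, add_zero]

theorem extZero_iff_surjective_homDifferential (A B : Rep K n ε) :
    extZero A B ↔ Function.Surjective (homDifferential A B) := by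
  constructor
  · intro ext_zero η
    refine exists_homDifferential_eq_of_splits A B η (by_contra fun not_splits => ext_zero ?_)
    exact ⟨_, _, _, isSES_cocycleExtension A B η, not_splits⟩
  · rintro surj ⟨E, f, g, hfg, not_splits⟩
    exact not_splits (hfg.splits_of_surjective_homDifferential surj)

end Differential

section EulerForm

variable {n : ℕ} {ε : ℕ → Bool}

/-- The Euler form `∑ₘ dim Aₘ · dim Bₘ - ∑ₘ dim A_{s(m)} · dim B_{t(m)}`, which is
`dim Hom(A, B) - dim Ext¹(A, B)`. Both sums run over `0 ≤ m ≤ n`; the terms for the vertex `0` and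
for the arrows `0` and `n` vanish because `A` and `B` are trivial at `0` and at `n + 1`. -/
noncomputable def eulerForm (A B : Rep K n ε) : ℤ :=
  ∑ m ∈ Finset.range (n + 1),
    ((Module.finrank K (A.V m) * Module.finrank K (B.V m) : ℤ) -
      Module.finrank K (A.V (asrc ε m)) * Module.finrank K (B.V (atgt ε m)))

theorem le_asrc (ε : ℕ → Bool) (m : ℕ) : m ≤ asrc ε m := by
  unfold asrc
  split_ifs <;> omega

theorem subsingleton_vertexHom (A B : Rep K n ε) {m : ℕ} (hm : m ∉ Finset.range (n + 1)) :
    Subsingleton (A.V m →ₗ[K] B.V m) :=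
  have := A.triv m (.inr (by simpa using hm))
  inferInstance

theorem subsingleton_arrowHom (A B : Rep K n ε) {m : ℕ} (hm : m ∉ Finset.range (n + 1)) :
    Subsingleton (A.V (asrc ε m) →ₗ[K] B.V (atgt ε m)) :=
  have n_lt_m : n < m := by simpa using hm
  have := A.triv _ (.inr (n_lt_m.trans_le (le_asrc ε m)))
  inferInstance

theorem eulerForm_eq_finrank_sub_finrank (A B : Rep K n ε) :
    eulerForm A B = (Module.finrank K (∀ m, A.V m →ₗ[K] B.V m) : ℤ) -
      Module.finrank K (∀ m, A.V (asrc ε m) →ₗ[K] B.V (atgt ε m)) := by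
  rw [finrank_pi_eq_sum_of_subsingleton fun _ => subsingleton_vertexHom A B,
    finrank_pi_eq_sum_of_subsingleton fun _ => subsingleton_arrowHom A B]
  simp only [eulerForm, Module.finrank_linearMap, Nat.cast_sum, Nat.cast_mul,
    Finset.sum_sub_distrib]

theorem excPair_iff_homZero_and_eulerForm_eq_zero (U V : Rep K n ε) :
    ExcPair U V ↔ homZero V U ∧ eulerForm V U = 0 := by
  have := finite_pi_of_subsingleton (R := K) fun _ => subsingleton_vertexHom V U
  have := finite_pi_of_subsingleton (R := K) fun _ => subsingleton_arrowHom V U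
  rw [ExcPair, extZero_iff_surjective_homDifferential, homZero_iff_injective_homDifferential,
    eulerForm_eq_finrank_sub_finrank, sub_eq_zero, Nat.cast_inj]
  refine and_congr_right fun inj => ⟨fun surj => ?_, fun finrank_eq => ?_⟩
  · exact (LinearEquiv.ofBijective _ ⟨inj, surj⟩).finrank_eq
  · exact (LinearMap.injective_iff_surjective_of_finrank_eq_finrank finrank_eq).1 inj

end EulerForm

section IntervalRepresentation

variable {n : ℕ} {ε : ℕ → Bool} {i j k l m : ℕ}

theorem XV_eq_top (hjn : j ≤ n) (hm : m ∈ Finset.Ioc i j) : XV K n i j m = ⊤ := by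
  rw [Finset.mem_Ioc] at hm
  exact if_pos (by omega)

theorem XV_eq_bot (hm : m ∉ Finset.Ioc i j) : XV K n i j m = ⊥ := by
  rw [Finset.mem_Ioc] at hm
  exact if_neg (by omega)

theorem finrank_Xrep (hjn : j ≤ n) :
    Module.finrank K ((Xrep K n ε i j).V m) = if m ∈ Finset.Ioc i j then 1 else 0 := by
  change Module.finrank K (XV K n i j m) = _
  split_ifs with hm
  · rw [XV_eq_top hjn hm, finrank_top, Module.finrank_self]
  · rw [XV_eq_bot hm, finrank_bot]

theorem subsingleton_Xrep (hm : m ∉ Finset.Ioc i j) : Subsingleton ((Xrep K n ε i j).V m) := by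
  change Subsingleton (XV K n i j m)
  rw [XV_eq_bot hm]
  infer_instance

theorem coe_Xφ (hjn : j ≤ n) (hm : atgt ε m ∈ Finset.Ioc i j) (x : XV K n i j (asrc ε m)) :
    (Xφ K n ε i j m x : K) = x := by
  rw [Finset.mem_Ioc] at hm
  rw [Xφ, dif_pos (by omega)]
  rfl

theorem injective_Xrep_φ (hjn : j ≤ n) (hm : atgt ε m ∈ Finset.Ioc i j) :
    Function.Injective ((Xrep K n ε i j).φ m) := fun x y hxy =>
  Subtype.ext <| by
    rw [← coe_Xφ hjn hm x, ← coe_Xφ hjn hm y]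
    exact congrArg Subtype.val hxy

theorem surjective_Xrep_φ (hjn : j ≤ n) (hm : asrc ε m ∈ Finset.Ioc i j) :
    Function.Surjective ((Xrep K n ε i j).φ m) := by
  intro y
  by_cases htgt : atgt ε m ∈ Finset.Ioc i j
  · have y_mem : y.1 ∈ XV K n i j (asrc ε m) := XV_eq_top (K := K) hjn hm ▸ Submodule.mem_top
    exact ⟨⟨y.1, y_mem⟩, Subtype.ext (coe_Xφ hjn htgt _)⟩
  · exact ⟨0, (subsingleton_Xrep htgt).elim _ _⟩

theorem RepHom.app_asrc_eq_zero_iff {A B : Rep K n ε} (θ : RepHom A B)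
    (surj : Function.Surjective (A.φ m)) (inj : Function.Injective (B.φ m)) :
    θ.app (asrc ε m) = 0 ↔ θ.app (atgt ε m) = 0 := by
  rw [← LinearMap.cancel_right surj, ← LinearMap.cancel_left inj, θ.comm, LinearMap.zero_comp,
    LinearMap.comp_zero]

section Hom

variable (θ : RepHom (Xrep K n ε k l) (Xrep K n ε i j))

theorem app_Xrep_eq_zero_of_notMem (hm : m ∉ Finset.Ioc k l ∩ Finset.Ioc i j) :
    θ.app m = 0 := by
  rw [Finset.mem_inter, not_and_or] at hm
  rcases hm with hk | hi
  · have := subsingleton_Xrep (K := K) (n := n) (ε := ε) hk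
    exact Subsingleton.elim _ _
  · have := subsingleton_Xrep (K := K) (n := n) (ε := ε) hi
    exact Subsingleton.elim _ _

theorem app_Xrep_eq_zero_iff_succ (hjn : j ≤ n) (hln : l ≤ n)
    (hsrc : asrc ε m ∈ Finset.Ioc k l) (htgt : atgt ε m ∈ Finset.Ioc i j) :
    θ.app m = 0 ↔ θ.app (m + 1) = 0 := by
  have app_iff := θ.app_asrc_eq_zero_iff (surjective_Xrep_φ hln hsrc) (injective_Xrep_φ hjn htgt)
  cases hm : ε m
  · rw [show asrc ε m = m + 1 by simp [asrc, hm], show atgt ε m = m by simp [atgt, hm]] at app_iff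
    exact app_iff.symm
  · rw [show asrc ε m = m by simp [asrc, hm], show atgt ε m = m + 1 by simp [atgt, hm]] at app_iff
    exact app_iff

theorem app_Xrep_eq_zero_iff_of_mem {m' : ℕ} (hjn : j ≤ n) (hln : l ≤ n)
    (hm : m ∈ Finset.Ioc k l ∩ Finset.Ioc i j) (hm' : m' ∈ Finset.Ioc k l ∩ Finset.Ioc i j) :
    θ.app m = 0 ↔ θ.app m' = 0 := by
  wlog hmm' : m ≤ m' generalizing m m'
  · exact (this hm' hm (by omega)).symm
  induction m', hmm' using Nat.le_induction with
  | base => rfl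
  | succ t hmt ih =>
    simp only [Finset.mem_inter, Finset.mem_Ioc] at hm hm' ih
    refine (ih (by omega)).trans (app_Xrep_eq_zero_iff_succ θ hjn hln ?_ ?_) <;>
    · simp only [asrc, atgt, Finset.mem_Ioc]
      split_ifs <;> omega

end Hom

-- A nonzero morphism vanishes exactly off the common support, and its vanishing propagates along
-- every arrow that starts in the support of `X_{k,l}` and ends in that of `X_{i,j}`.
theorem common_support_of_not_homZero (hjn : j ≤ n) (hln : l ≤ n)
    (h : ¬ homZero (Xrep K n ε k l) (Xrep K n ε i j)) :
    (Finset.Ioc k l ∩ Finset.Ioc i j).Nonempty ∧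
      ∀ m, asrc ε m ∈ Finset.Ioc k l → atgt ε m ∈ Finset.Ioc i j →
        (m ∈ Finset.Ioc k l ∩ Finset.Ioc i j ↔ m + 1 ∈ Finset.Ioc k l ∩ Finset.Ioc i j) := by
  simp only [homZero, not_forall] at h
  obtain ⟨θ, t, ht⟩ := h
  have t_mem : t ∈ Finset.Ioc k l ∩ Finset.Ioc i j :=
    by_contra fun hn => ht (app_Xrep_eq_zero_of_notMem θ hn)
  have mem_iff (m : ℕ) : m ∈ Finset.Ioc k l ∩ Finset.Ioc i j ↔ θ.app m ≠ 0 :=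
    ⟨fun hm => (app_Xrep_eq_zero_iff_of_mem θ hjn hln hm t_mem).not.2 ht,
      fun hm => by_contra fun hn => hm (app_Xrep_eq_zero_of_notMem θ hn)⟩
  refine ⟨⟨t, t_mem⟩, fun m hsrc htgt => ?_⟩
  rw [mem_iff, mem_iff, ne_eq, app_Xrep_eq_zero_iff_succ θ hjn hln hsrc htgt]

end IntervalRepresentation

section ChordEuler

variable {n : ℕ} {ε : ℕ → Bool} {i j k l : ℕ}

/-- The Euler form `⟨X_c, X_d⟩` of two interval representations in terms of their chords. Only
arrows at an endpoint of one of the chords contribute. -/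
def chordEuler (ε : ℕ → Bool) (c d : ℕ × ℕ) : ℤ :=
  (if ε d.2 = true ∧ d.2 ∈ Finset.Ioc c.1 c.2 then 1 else 0) -
    (if ε d.1 = true ∧ d.1 ∈ Finset.Ioc c.1 c.2 then 1 else 0) +
    (if ε c.2 = false ∧ c.2 ∈ Finset.Ioc d.1 d.2 then 1 else 0) -
    (if ε c.1 = false ∧ c.1 ∈ Finset.Ioc d.1 d.2 then 1 else 0)

theorem indicator_Ioc_sub_succ (hij : i ≤ j) (m : ℕ) :
    ((if m ∈ Finset.Ioc i j then 1 else 0) - (if m + 1 ∈ Finset.Ioc i j then 1 else 0) : ℤ) =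
      (if j = m then 1 else 0) - (if i = m then 1 else 0) := by
  simp only [Finset.mem_Ioc]
  split_ifs <;> omega

-- For `ε m = +` the `m`-th term is `uₘ (vₘ - vₘ₊₁)`, for `ε m = -` it is `(uₘ - uₘ₊₁) vₘ`, where
-- `u` and `v` are the indicators of the two supports.
theorem eulerForm_Xrep (hij : i ≤ j) (hjn : j ≤ n) (hkl : k ≤ l) (hln : l ≤ n) :
    eulerForm (Xrep K n ε k l) (Xrep K n ε i j) = chordEuler ε (k, l) (i, j) := by
  let u (m : ℕ) : ℤ := if m ∈ Finset.Ioc k l then 1 else 0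
  let v (m : ℕ) : ℤ := if m ∈ Finset.Ioc i j then 1 else 0
  have term_eq (m : ℕ) : u m * v m - u (asrc ε m) * v (atgt ε m) =
      (if j = m then if ε m then u m else 0 else 0) -
        (if i = m then if ε m then u m else 0 else 0) +
        (if l = m then if ε m then 0 else v m else 0) -
        (if k = m then if ε m then 0 else v m else 0) := by
    have hu := indicator_Ioc_sub_succ hkl m
    have hv := indicator_Ioc_sub_succ hij m
    cases hm : ε m <;> simp only [asrc, atgt, hm, if_true, if_false, Bool.false_eq_true, ite_self]
    · rw [← sub_mul, hu]
      split_ifs <;> ring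
    · rw [← mul_sub, hv]
      split_ifs <;> ring
  have mem_range {t : ℕ} (ht : t ≤ n) : t ∈ Finset.range (n + 1) := by simpa using ht
  calc eulerForm (Xrep K n ε k l) (Xrep K n ε i j)
      = ∑ m ∈ Finset.range (n + 1), (u m * v m - u (asrc ε m) * v (atgt ε m)) := by
        simp only [eulerForm, finrank_Xrep hjn, finrank_Xrep hln, Nat.cast_ite, Nat.cast_one,
          Nat.cast_zero, u, v]
    _ = chordEuler ε (k, l) (i, j) := by
        simp only [term_eq, Finset.sum_add_distrib, Finset.sum_sub_distrib, Finset.sum_ite_eq,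
          mem_range hjn, mem_range hln, mem_range (hij.trans hjn),
          mem_range (hkl.trans hln), if_true, chordEuler, u, v]
        simp only [ite_and, ← Bool.not_eq_true, ite_not]

theorem eulerForm_Xrep_eq_one_of_not_homZero (hjn : j ≤ n) (hln : l ≤ n)
    (h : ¬ homZero (Xrep K n ε k l) (Xrep K n ε i j)) :
    eulerForm (Xrep K n ε k l) (Xrep K n ε i j) = 1 := by
  obtain ⟨⟨t, ht⟩, closed⟩ := common_support_of_not_homZero hjn hln h
  simp only [Finset.mem_inter, Finset.mem_Ioc] at ht
  simp only [asrc, atgt, Finset.mem_inter, Finset.mem_Ioc] at closed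
  have sign_i (hki : k < i) : ε i = false := by
    by_contra hε
    have := closed i
    grind
  have sign_k (hik : i < k) : ε k = true := by
    by_contra hε
    have := closed k
    grind
  have sign_j (hjl : j < l) : ε j = true := by
    by_contra hε
    have := closed j
    grind
  have sign_l (hlj : l < j) : ε l = false := by
    by_contra hε
    have := closed l
    grind
  rw [eulerForm_Xrep (by omega) hjn (by omega) hln, chordEuler]
  simp only [Finset.mem_Ioc]
  clear closed
  grind

theorem excPair_Xrep_iff_chordEuler_eq_zero (hij : i ≤ j) (hjn : j ≤ n) (hkl : k ≤ l)
    (hln : l ≤ n) :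
    ExcPair (Xrep K n ε i j) (Xrep K n ε k l) ↔ chordEuler ε (k, l) (i, j) = 0 := by
  rw [excPair_iff_homZero_and_eulerForm_eq_zero, ← eulerForm_Xrep (K := K) hij hjn hkl hln,
    and_iff_right_iff_imp]
  intro euler_zero
  by_contra hom_nonzero
  have euler_one := eulerForm_Xrep_eq_one_of_not_homZero hjn hln hom_nonzero
  omega

theorem crosses_comm (ε : ℕ → Bool) (c d : ℕ × ℕ) : Crosses ε c d ↔ Crosses ε d c := by
  unfold Crosses
  tauto

theorem chordEuler_ne_zero_iff_of_overlap (ε : ℕ → Bool) (hik : i < k) (hkj : k < j)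
    (hjl : j < l) :
    (chordEuler ε (k, l) (i, j) ≠ 0 ∧ chordEuler ε (i, j) (k, l) ≠ 0) ↔ ε k = ε j := by
  simp only [chordEuler, Finset.mem_Ioc]
  grind

theorem chordEuler_ne_zero_iff_of_nested (ε : ℕ → Bool) (hik : i < k) (hkl : k < l)
    (hlj : l < j) :
    (chordEuler ε (k, l) (i, j) ≠ 0 ∧ chordEuler ε (i, j) (k, l) ≠ 0) ↔ ε k ≠ ε l := by
  simp only [chordEuler, Finset.mem_Ioc]
  grind

theorem chordEuler_eq_zero_of_lt (ε : ℕ → Bool) (hij : i ≤ j) (hjk : j < k)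
    (hkl : k ≤ l) : chordEuler ε (k, l) (i, j) = 0 := by
  simp only [chordEuler, Finset.mem_Ioc]
  grind

theorem chordEuler_eq_zero_or_of_sharesEndpoint (ε : ℕ → Bool) {c d : ℕ × ℕ} (hc : c.1 < c.2)
    (hd : d.1 < d.2) (hcd : c ≠ d) (hshare : SharesEndpoint c d) :
    chordEuler ε d c = 0 ∨ chordEuler ε c d = 0 := by
  obtain ⟨i, j⟩ := c
  obtain ⟨k, l⟩ := d
  simp only [ne_eq, Prod.mk.injEq] at hcd
  simp only [SharesEndpoint] at hshare hc hd
  simp only [chordEuler, Finset.mem_Ioc]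
  rcases hshare with rfl | rfl | rfl | rfl <;> grind

theorem not_crosses_of_sharesEndpoint {c d : ℕ × ℕ} (hshare : SharesEndpoint c d) :
    ¬ Crosses ε c d := by
  simp only [SharesEndpoint, Crosses] at *
  omega

theorem chordEuler_ne_zero_iff_crosses (ε : ℕ → Bool) {c d : ℕ × ℕ} (hc : c.1 < c.2)
    (hd : d.1 < d.2) (hcd : c ≠ d) :
    (chordEuler ε d c ≠ 0 ∧ chordEuler ε c d ≠ 0) ↔ Crosses ε c d := by
  wlog hle : c.1 ≤ d.1 generalizing c d
  · rw [and_comm, crosses_comm]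
    exact this hd hc hcd.symm (by omega)
  by_cases hshare : SharesEndpoint c d
  · have one_zero := chordEuler_eq_zero_or_of_sharesEndpoint ε hc hd hcd hshare
    have not_crosses := not_crosses_of_sharesEndpoint (ε := ε) hshare
    tauto
  obtain ⟨i, j⟩ := c
  obtain ⟨k, l⟩ := d
  simp only [SharesEndpoint] at hshare hle hc hd
  obtain disjoint | overlap | nested : j < k ∨ (k < j ∧ j < l) ∨ l < j := by omega
  · simp only [chordEuler_eq_zero_of_lt ε hc.le disjoint hd.le, Crosses]
    omega
  · rw [chordEuler_ne_zero_iff_of_overlap ε (by omega) overlap.1 overlap.2, Crosses]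
    grind
  · rw [chordEuler_ne_zero_iff_of_nested ε (by omega) hd nested, Crosses]
    grind

end ChordEuler

/-- Lemma 3.5 a): neither `(U,V)` nor `(V,U)` is exceptional iff the strands
intersect nontrivially (the chords cross). -/
theorem not_exceptional_iff_cross (K : Type) [Field K] (n : ℕ) (ε : ℕ → Bool)
    (i j k l : ℕ) (hij : i < j) (hjn : j ≤ n) (hkl : k < l) (hln : l ≤ n)
    (hne : ¬(i = k ∧ j = l)) :
    (¬ ExcPair (Xrep K n ε i j) (Xrep K n ε k l) ∧
     ¬ ExcPair (Xrep K n ε k l) (Xrep K n ε i j)) ↔ Crosses ε (i, j) (k, l) := by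
  rw [excPair_Xrep_iff_chordEuler_eq_zero hij.le hjn hkl.le hln,
    excPair_Xrep_iff_chordEuler_eq_zero hkl.le hln hij.le hjn]
  exact chordEuler_ne_zero_iff_crosses ε hij hkl (by simpa using hne)

end ESPaper
end
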